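/- arXiv:2006.16325 — 2 statements merged into one kernel-verified Lean document; each statement's English description precedes it below -/
import Mathlib

section
/- Let 0 < α < 1, η ≥ 0, and let λ ∈ ℂ belong to the set D_η = {λ ∈ ℂ : Im λ ≠ 0} ∪ {λ ∈ ℂ : Re λ + η > 0}. Then the integral A_λ = ∫_{−∞}^{+∞} |ξ|^{2α−1} / (η + λ + ξ²) dξ converges and A_λ = (π / sin(απ)) · (η + λ)^{α−1}, where (η + λ)^{α−1} denotes the principal branch of the complex power. -/
open MeasureTheory

/-!
Put `z = η + lam`, a point of the slit plane. The integrand is even and the substitution `t = ξ²`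
on the half-line turns the integral into `∫ t in (0, ∞), t ^ (α - 1) / (z + t)`.

For real `z = x > 0` this is computed (`integral_rpow_div_add_real`) by writing
`1 / (x + t) = ∫ s in (0, ∞), exp (-(x + t) s)` and exchanging the integrals, which gives
`Γ(α) Γ(1 - α) x ^ (α - 1)`; the reflection formula turns the Gamma factors into `π / sin (α π)`.

Both sides are holomorphic in `z` on the slit plane. For the integral this is differentiation under
the integral sign (`differentiableOn_integral_kernel`), where the domination comes from the bound
`c (1 + t) ≤ ‖z + t‖` for `t ≥ 0` (`exists_mul_one_add_le_norm_add`). As the slit plane is connected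
and the two sides agree on the positive reals, the identity theorem gives the formula everywhere
(`integral_kernel`).
-/

open Set Filter Topology

/-- A point of the slit plane stays away from the negative half-line, in a form which also captures
the growth at infinity. The reason is that, with `θ` the argument of `z`,
`‖z + t‖² ≥ cos² (θ / 2) (‖z‖ + t)²`. -/
lemma exists_mul_one_add_le_norm_add {z : ℂ} (hz : z ∈ Complex.slitPlane) :
    ∃ c : ℝ, 0 < c ∧ ∀ t : ℝ, 0 ≤ t → c * (1 + t) ≤ ‖z + t‖ := by
  have hr : 0 < ‖z‖ := norm_pos_iff.mpr (Complex.slitPlane_ne_zero hz)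
  have hs : 0 < ‖z‖ + z.re := by
    rcases Complex.mem_slitPlane_iff.mp hz with h | h
    · linarith
    · have := (abs_lt.mp (Complex.abs_re_lt_norm.mpr h)).1
      linarith
  -- `k = (1 + cos θ) / 2 = cos² (θ / 2)`, where `θ` is the argument of `z`.
  set k : ℝ := (‖z‖ + z.re) / (2 * ‖z‖) with hk
  have hkpos : 0 < k := by positivity
  have key : ∀ t : ℝ, 0 ≤ t → √k * (‖z‖ + t) ≤ ‖z + t‖ := by
    intro t ht
    refine (sq_le_sq₀ (by positivity) (norm_nonneg _)).mp ?_
    have hn : ‖z‖ ^ 2 = z.re ^ 2 + z.im ^ 2 := by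
      rw [Complex.sq_norm, Complex.normSq_apply]; ring
    have hnt : ‖z + t‖ ^ 2 = (z.re + t) ^ 2 + z.im ^ 2 := by
      rw [Complex.sq_norm, Complex.normSq_apply]; simp; ring
    have hre : 0 ≤ ‖z‖ - z.re := sub_nonneg.mpr (Complex.re_le_norm z)
    have hid : ‖z + t‖ ^ 2 - k * (‖z‖ + t) ^ 2 =
        (‖z‖ - z.re) / (2 * ‖z‖) * (‖z‖ - t) ^ 2 := by
      rw [hnt, hk, show (z.re + t) ^ 2 + z.im ^ 2 = ‖z‖ ^ 2 + 2 * t * z.re + t ^ 2 by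
        rw [hn]; ring]
      field_simp
      ring
    have hpos : 0 ≤ (‖z‖ - z.re) / (2 * ‖z‖) * (‖z‖ - t) ^ 2 := by positivity
    rw [mul_pow, Real.sq_sqrt hkpos.le]
    linarith
  refine ⟨√k * min 1 ‖z‖, by positivity, fun t ht => (le_trans ?_ (key t ht))⟩
  rw [mul_assoc]
  gcongr
  have h1 := min_le_left 1 ‖z‖
  have h2 := min_le_right 1 ‖z‖
  nlinarith

lemma integrableOn_rpow_div_one_add {α : ℝ} (hα0 : 0 < α) (hα1 : α < 1) :
    IntegrableOn (fun t : ℝ => t ^ (α - 1) / (1 + t)) (Ioi 0) := by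
  have hm : Measurable (fun t : ℝ => t ^ (α - 1) / (1 + t)) := by fun_prop
  rw [← Ioc_union_Ioi_eq_Ioi zero_le_one]
  refine IntegrableOn.union ?_ ?_
  · have h : IntegrableOn (fun t : ℝ => t ^ (α - 1)) (Ioc 0 1) :=
      (intervalIntegrable_iff_integrableOn_Ioc_of_le zero_le_one).mp
        (intervalIntegral.intervalIntegrable_rpow' (by linarith))
    refine Integrable.mono' h hm.aestronglyMeasurable ?_
    filter_upwards [ae_restrict_mem measurableSet_Ioc] with t ht
    have : 0 < t := ht.1
    rw [Real.norm_of_nonneg (by positivity)]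
    exact div_le_self (by positivity) (by linarith)
  · have h : IntegrableOn (fun t : ℝ => t ^ (α - 2)) (Ioi 1) :=
      integrableOn_Ioi_rpow_of_lt (by linarith) one_pos
    refine Integrable.mono' h hm.aestronglyMeasurable ?_
    filter_upwards [ae_restrict_mem measurableSet_Ioi] with t ht
    have : 0 < t := one_pos.trans ht
    rw [Real.norm_of_nonneg (by positivity), show α - 2 = (α - 1) - 1 by ring,
      Real.rpow_sub_one this.ne' (α - 1)]
    gcongr
    linarith

lemma integrableOn_kernel {α : ℝ} (hα0 : 0 < α) (hα1 : α < 1) {z : ℂ}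
    (hz : z ∈ Complex.slitPlane) :
    IntegrableOn (fun t : ℝ => ((t ^ (α - 1) : ℝ) : ℂ) / (z + t)) (Ioi 0) := by
  obtain ⟨c, hc, h⟩ := exists_mul_one_add_le_norm_add hz
  refine Integrable.mono' ((integrableOn_rpow_div_one_add hα0 hα1).const_mul c⁻¹)
    (by apply Measurable.aestronglyMeasurable; fun_prop) ?_
  filter_upwards [ae_restrict_mem measurableSet_Ioi] with t ht
  have ht : 0 < t := ht
  rw [norm_div, Complex.norm_real, Real.norm_of_nonneg (by positivity)]
  calc t ^ (α - 1) / ‖z + t‖ ≤ t ^ (α - 1) / (c * (1 + t)) := by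
        gcongr
        exact h t ht.le
    _ = c⁻¹ * (t ^ (α - 1) / (1 + t)) := by field_simp

lemma differentiableOn_integral_kernel {α : ℝ} (hα0 : 0 < α) (hα1 : α < 1) :
    DifferentiableOn ℂ
      (fun z : ℂ => ∫ t : ℝ in Ioi 0, ((t ^ (α - 1) : ℝ) : ℂ) / (z + t)) Complex.slitPlane := by
  intro z hz
  obtain ⟨c, hc, h⟩ := exists_mul_one_add_le_norm_add hz
  -- On a ball of radius `c / 2` the lower bound persists with half the constant.
  have hball : ∀ w ∈ Metric.ball z (c / 2), ∀ t : ℝ, 0 ≤ t →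
      c / 2 * (1 + t) ≤ ‖w + t‖ := by
    intro w hw t ht
    rw [mem_ball_iff_norm] at hw
    have h1 := h t ht
    have h2 : ‖z + t‖ ≤ ‖w + t‖ + ‖w - z‖ := by
      have := norm_sub_le (w + t) (w - z)
      rwa [show w + t - (w - z) = z + t by ring] at this
    nlinarith
  refine (hasDerivAt_integral_of_dominated_loc_of_deriv_le (𝕜 := ℂ)
    (F := fun w t => ((t ^ (α - 1) : ℝ) : ℂ) / (w + t))
    (F' := fun w t => -(((t ^ (α - 1) : ℝ) : ℂ) / (w + t) ^ 2))
    (bound := fun t => ((c / 2) ^ 2)⁻¹ * (t ^ (α - 1) / (1 + t)))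
    (Metric.ball_mem_nhds z (half_pos hc)) (.of_forall fun w => by
      apply Measurable.aestronglyMeasurable; fun_prop)
    (integrableOn_kernel hα0 hα1 hz) (by apply Measurable.aestronglyMeasurable; fun_prop) ?_
    ((integrableOn_rpow_div_one_add hα0 hα1).const_mul _) ?_).2.differentiableAt.differentiableWithinAt
  · filter_upwards [ae_restrict_mem measurableSet_Ioi] with t ht w hw
    have ht : 0 < t := ht
    rw [norm_neg, norm_div, norm_pow, Complex.norm_real, Real.norm_of_nonneg (by positivity)]
    calc t ^ (α - 1) / ‖w + t‖ ^ 2 ≤ t ^ (α - 1) / ((c / 2 * (1 + t)) ^ 2) := by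
          gcongr
          exact hball w hw t ht.le
      _ ≤ t ^ (α - 1) / ((c / 2) ^ 2 * (1 + t)) := by
          gcongr
          rw [mul_pow]
          gcongr
          nlinarith
      _ = _ := by field_simp
  · filter_upwards [ae_restrict_mem measurableSet_Ioi] with t ht w hw
    have ht : 0 < t := ht
    have hne : w + t ≠ 0 := by
      rw [← norm_pos_iff]
      exact lt_of_lt_of_le (by positivity) (hball w hw t ht.le)
    have := (((hasDerivAt_id w).add_const (t : ℂ)).fun_inv hne).const_mul ((t ^ (α - 1) : ℝ) : ℂ)
    simpa [div_eq_mul_inv] using this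

/-- The case of a positive real parameter, by Fubini applied to
`t ^ (α - 1) * exp (-((x + t) * s))`. -/
lemma integral_rpow_div_add_real {α x : ℝ} (hα0 : 0 < α) (hα1 : α < 1) (hx : 0 < x) :
    ∫ t : ℝ in Ioi 0, t ^ (α - 1) / (x + t) = Real.pi / Real.sin (α * Real.pi) * x ^ (α - 1) := by
  have hexp : ∀ r : ℝ, 0 < r → ∀ a : ℝ, 0 < a →
      IntegrableOn (fun s : ℝ => s ^ (a - 1) * Real.exp (-(r * s))) (Ioi 0) := by
    intro r hr a ha
    have := integrableOn_rpow_mul_exp_neg_mul_rpow (p := 1) (s := a - 1) (by linarith) one_pos hr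
    simpa using this
  have hinner_t : ∀ t : ℝ, 0 < t →
      ∫ s : ℝ in Ioi 0, t ^ (α - 1) * Real.exp (-((x + t) * s)) = t ^ (α - 1) / (x + t) := by
    intro t ht
    have := Real.integral_rpow_mul_exp_neg_mul_Ioi one_pos (add_pos hx ht)
    rw [integral_const_mul]
    simp at this
    rw [div_eq_mul_inv]
    simp [this]
  have hinner_s : ∀ s : ℝ, 0 < s →
      ∫ t : ℝ in Ioi 0, t ^ (α - 1) * Real.exp (-((x + t) * s)) =
        Real.Gamma α * (s ^ ((1 - α) - 1) * Real.exp (-(x * s))) := by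
    intro s hs
    have := Real.integral_rpow_mul_exp_neg_mul_Ioi hα0 hs
    calc _ = ∫ t : ℝ in Ioi 0, Real.exp (-(x * s)) * (t ^ (α - 1) * Real.exp (-(s * t))) := by
          congr 1 with t
          rw [show -((x + t) * s) = -(x * s) + -(s * t) by ring, Real.exp_add]
          ring
      _ = _ := by
          rw [integral_const_mul, this, show 1 - α - 1 = -α by ring, Real.rpow_neg hs.le,
            one_div, Real.inv_rpow hs.le]
          ring
  have hint : Integrable (Function.uncurry fun t s : ℝ => t ^ (α - 1) * Real.exp (-((x + t) * s)))
      ((volume.restrict (Ioi 0)).prod (volume.restrict (Ioi 0))) := by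
    rw [integrable_prod_iff' (by
      apply Measurable.aestronglyMeasurable; unfold Function.uncurry; fun_prop)]
    constructor
    · filter_upwards [ae_restrict_mem measurableSet_Ioi] with s hs
      refine ((hexp s hs α hα0).const_mul (Real.exp (-(x * s)))).congr (.of_forall fun t => ?_)
      simp only [Function.uncurry]
      rw [show -((x + t) * s) = -(x * s) + -(s * t) by ring, Real.exp_add]
      ring
    · refine ((hexp x hx (1 - α) (by linarith)).const_mul (Real.Gamma α)).congr ?_
      filter_upwards [ae_restrict_mem measurableSet_Ioi] with s hs
      rw [← hinner_s s hs]
      refine setIntegral_congr_fun measurableSet_Ioi fun t ht => ?_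
      have ht : 0 < t := ht
      simp only [Function.uncurry]
      rw [Real.norm_of_nonneg (by positivity)]
  calc _ = ∫ t : ℝ in Ioi 0, ∫ s : ℝ in Ioi 0, t ^ (α - 1) * Real.exp (-((x + t) * s)) :=
        setIntegral_congr_fun measurableSet_Ioi fun t ht => (hinner_t t ht).symm
    _ = ∫ s : ℝ in Ioi 0, ∫ t : ℝ in Ioi 0, t ^ (α - 1) * Real.exp (-((x + t) * s)) :=
        integral_integral_swap hint
    _ = ∫ s : ℝ in Ioi 0, Real.Gamma α * (s ^ ((1 - α) - 1) * Real.exp (-(x * s))) :=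
        setIntegral_congr_fun measurableSet_Ioi fun s hs => hinner_s s hs
    _ = _ := by
        rw [integral_const_mul, Real.integral_rpow_mul_exp_neg_mul_Ioi (by linarith) hx,
          mul_comm α Real.pi, ← Real.Gamma_mul_Gamma_one_sub, one_div, Real.inv_rpow hx.le,
          ← Real.rpow_neg hx.le, neg_sub]
        ring

/-- The formula on the half-line for `z` in the slit plane, by the identity theorem from the positive
real axis. -/
lemma integral_kernel {α : ℝ} (hα0 : 0 < α) (hα1 : α < 1) {z : ℂ}
    (hz : z ∈ Complex.slitPlane) :
    ∫ t : ℝ in Ioi 0, ((t ^ (α - 1) : ℝ) : ℂ) / (z + t) =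
      ((Real.pi / Real.sin (α * Real.pi) : ℝ) : ℂ) * z ^ ((α : ℂ) - 1) := by
  have hF := (differentiableOn_integral_kernel hα0 hα1).analyticOnNhd Complex.isOpen_slitPlane
  have hG : AnalyticOnNhd ℂ
      (fun z : ℂ => ((Real.pi / Real.sin (α * Real.pi) : ℝ) : ℂ) * z ^ ((α : ℂ) - 1))
      Complex.slitPlane := by
    refine DifferentiableOn.analyticOnNhd (fun w hw => ?_) Complex.isOpen_slitPlane
    exact ((differentiableAt_id.cpow_const hw).const_mul _).differentiableWithinAt
  have hconn : IsPreconnected Complex.slitPlane :=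
    (Complex.starConvex_one_slitPlane.isPathConnected
      Complex.one_mem_slitPlane).isConnected.isPreconnected
  refine hF.eqOn_of_preconnected_of_frequently_eq hG hconn Complex.one_mem_slitPlane ?_ hz
  have htend : Tendsto ((↑) : ℝ → ℂ) (𝓝[≠] 1) (𝓝[≠] 1) := by
    rw [tendsto_nhdsWithin_iff]
    refine ⟨tendsto_nhdsWithin_of_tendsto_nhds Complex.continuous_ofReal.continuousAt, ?_⟩
    filter_upwards [self_mem_nhdsWithin] with y hy
    simpa using hy
  refine htend.frequently (Eventually.frequently ?_)
  filter_upwards [nhdsWithin_le_nhds (Ioi_mem_nhds (zero_lt_one (α := ℝ)))] with x hx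
  have hx : 0 < x := hx
  have := congrArg ((↑) : ℝ → ℂ) (integral_rpow_div_add_real hα0 hα1 hx)
  rw [← integral_complex_ofReal, Complex.ofReal_mul, Complex.ofReal_cpow hx.le] at this
  simpa using this

lemma integrable_and_integral_of_even {f : ℝ → ℂ} (hf : ∀ x, f (-x) = f x)
    (hint : IntegrableOn f (Ioi 0)) : Integrable f ∧ ∫ x, f x = 2 * ∫ x in Ioi 0, f x := by
  have hIic : IntegrableOn f (Iic 0) := by
    have := ((integrableOn_Ici_iff_integrableOn_Ioi (μ := volume)).mpr hint).comp_neg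
    simpa [hf] using this
  refine ⟨?_, ?_⟩
  · rw [← integrableOn_univ, ← Iic_union_Ioi (a := (0 : ℝ))]
    exact hIic.union hint
  · rw [← intervalIntegral.integral_Iic_add_Ioi hIic hint, two_mul]
    congr 1
    have := integral_comp_neg_Ioi 0 f
    simpa [hf] using this.symm

theorem stmt_4 (α η : ℝ) (lam : ℂ) (hα0 : 0 < α) (hα1 : α < 1) (hη : 0 ≤ η)
    (hlam : lam.im ≠ 0 ∨ 0 < lam.re + η) :
    Integrable
      (fun ξ : ℝ => ((|ξ| ^ (2 * α - 1) : ℝ) : ℂ) / ((η : ℂ) + lam + (ξ : ℂ) ^ 2))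
      volume ∧
    ∫ ξ : ℝ, ((|ξ| ^ (2 * α - 1) : ℝ) : ℂ) / ((η : ℂ) + lam + (ξ : ℂ) ^ 2) =
      ((Real.pi / Real.sin (α * Real.pi) : ℝ) : ℂ) *
        ((η : ℂ) + lam) ^ ((α : ℂ) - 1) := by
  set z : ℂ := (η : ℂ) + lam with hzdef
  have hz : z ∈ Complex.slitPlane := by
    rw [Complex.mem_slitPlane_iff]
    rcases hlam with h | h
    · right; simpa [hzdef] using h
    · left; simp [hzdef]; linarith
  set f : ℝ → ℂ := fun ξ => ((|ξ| ^ (2 * α - 1) : ℝ) : ℂ) / (z + (ξ : ℂ) ^ 2) with hfdef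
  set g : ℝ → ℂ := fun t => ((t ^ (α - 1) : ℝ) : ℂ) / (z + t) with hgdef
  -- The substitution `t = ξ²`, whose Jacobian is `2 ξ`.
  have hsub : ∀ ξ ∈ Ioi (0 : ℝ),
      (|(2 : ℝ)| * ξ ^ ((2 : ℝ) - 1)) • g (ξ ^ (2 : ℝ)) = 2 * f ξ := by
    intro ξ hξ
    have hξ : 0 < ξ := hξ
    have hpow : ξ ^ (2 * α - 1) = ξ * (ξ ^ (2 : ℝ)) ^ (α - 1) := by
      rw [← Real.rpow_mul hξ.le, show 2 * α - 1 = 1 + 2 * (α - 1) by ring, Real.rpow_add hξ,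
        Real.rpow_one]
    simp only [hfdef, hgdef, abs_of_pos hξ, hpow, Complex.real_smul]
    norm_num
    ring
  have hfi : IntegrableOn f (Ioi 0) := by
    have h1 := (integrableOn_Ioi_comp_rpow_iff g two_ne_zero).mpr (integrableOn_kernel hα0 hα1 hz)
    have h2 := ((integrableOn_congr_fun hsub measurableSet_Ioi).mp h1).const_mul (1 / 2 : ℂ)
    refine h2.congr (.of_forall fun ξ => ?_)
    simp
  obtain ⟨h1, h2⟩ := integrable_and_integral_of_even (f := f) (fun x => by simp [hfdef]) hfi
  refine ⟨h1, h2.trans ?_⟩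
  rw [← integral_kernel hα0 hα1 hz, ← integral_const_mul,
    ← integral_comp_rpow_Ioi g (two_ne_zero : (2 : ℝ) ≠ 0)]
  exact (setIntegral_congr_fun measurableSet_Ioi hsub).symm
end

section
/- Let 0 < α < 1, η ≥ 0, let v : [0, ∞) → ℝ be continuous, and set u(t) = ∫₀ᵗ v(s) ds and φ(ξ, t) = ∫₀ᵗ μ(ξ) e^{−(ξ²+η)(t−s)} v(s) ds for ξ ∈ ℝ, t ≥ 0. Then for every t > 0 the three integrals below converge absolutely and ∫_{−∞}^{+∞} (ξ² + η) φ(ξ, t) ( ∫₀ᵗ φ(ξ, s) ds ) dξ = u(t) ∫_{−∞}^{+∞} φ(ξ, t) μ(ξ) dξ − ∫_{−∞}^{+∞} φ(ξ, t)² dξ. -/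
open MeasureTheory

/-!
Write `φ ξ t = μ(ξ) W(ξ² + η, t)`, where `W(l, ·)` (`relax`) solves `W' = -l W + v`, `W(0) = 0`.
Integrating this ODE in time gives `l ∫₀ᵗ W = u(t) - W(t)` (`mul_integral_relax`); multiplying by
`μ² W(t)` shows that the claimed identity already holds between the integrands, for every `ξ`.
So only integrability has to be checked. For bounded `v` one has `|W(l, t)| ≤ C / (1 + l)`
(`abs_relax_le`), hence `|φ μ| ≤ C |ξ|^(2α-1) / (1 + ξ²)`, which is integrable because
`-1 < 2α-1 < 1` (`integrable_weight`); and `φ²` is `φ μ` times the bounded function `W`.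
-/

/-- The solution `W` of the relaxation equation `W' = -l W + V` with `W(0) = 0`,
in Duhamel form. -/
noncomputable def relax (V : ℝ → ℝ) (l t : ℝ) : ℝ :=
  ∫ s in (0 : ℝ)..t, Real.exp (-l * (t - s)) * V s

lemma relax_eq (V : ℝ → ℝ) (l t : ℝ) :
    relax V l t = Real.exp (-l * t) * ∫ s in (0 : ℝ)..t, Real.exp (l * s) * V s := by
  unfold relax
  rw [← intervalIntegral.integral_const_mul]
  congr 1
  ext s
  rw [← mul_assoc, ← Real.exp_add]
  ring_nf

lemma hasDerivAt_relax {V : ℝ → ℝ} (hV : Continuous V) (l t : ℝ) :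
    HasDerivAt (relax V l) (-l * relax V l t + V t) t := by
  have h1 : HasDerivAt (fun t => Real.exp (-l * t)) (Real.exp (-l * t) * -l) t := by
    simpa using ((hasDerivAt_id t).const_mul (-l)).exp
  have hc : Continuous fun s => Real.exp (l * s) * V s := by fun_prop
  have h2 := hc.integral_hasStrictDerivAt 0 t |>.hasDerivAt
  have h3 := h1.mul h2
  have he : Real.exp (-l * t) * Real.exp (l * t) = 1 := by
    rw [← Real.exp_add]; simp
  rw [show relax V l = _ from funext (relax_eq V l)]
  refine h3.congr_deriv ?_
  linear_combination (V t) * he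

/-- The relaxation equation integrated over `[0, t]`. -/
lemma mul_integral_relax {V : ℝ → ℝ} (hV : Continuous V) (l t : ℝ) :
    l * ∫ s in (0 : ℝ)..t, relax V l s = (∫ s in (0 : ℝ)..t, V s) - relax V l t := by
  have hc : Continuous (relax V l) :=
    continuous_iff_continuousAt.2 fun s => (hasDerivAt_relax hV l s).continuousAt
  have h := intervalIntegral.integral_eq_sub_of_hasDerivAt (a := 0) (b := t)
    (fun s _ => hasDerivAt_relax hV l s)
    (Continuous.intervalIntegrable (by fun_prop) _ _)
  rw [intervalIntegral.integral_add (Continuous.intervalIntegrable (by fun_prop) _ _)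
    (hV.intervalIntegrable _ _), intervalIntegral.integral_const_mul,
    show relax V l 0 = 0 by simp [relax]] at h
  linarith

/-- Since `∫₀ᵗ exp(-l(t-s)) ds` is at most `t`, and `l` times it is at most `1`, it is at most
`(1 + t) / (1 + l)`. -/
lemma abs_relax_le {V : ℝ → ℝ} {l t M : ℝ} (hl : 0 ≤ l) (ht : 0 ≤ t)
    (hM : ∀ s ∈ Set.Icc 0 t, |V s| ≤ M) :
    |relax V l t| ≤ M * (1 + t) / (1 + l) := by
  have hM0 : 0 ≤ M := (abs_nonneg _).trans (hM 0 ⟨le_rfl, ht⟩)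
  set K := ∫ s in (0 : ℝ)..t, Real.exp (-l * (t - s)) with hK
  have h1 : |relax V l t| ≤ M * K := by
    rw [hK, ← intervalIntegral.integral_const_mul, ← Real.norm_eq_abs]
    refine intervalIntegral.norm_integral_le_of_norm_le ht (Filter.Eventually.of_forall ?_)
      (Continuous.intervalIntegrable (by fun_prop) _ _)
    intro s hs
    rw [norm_mul, Real.norm_of_nonneg (Real.exp_nonneg _), mul_comm, Real.norm_eq_abs]
    exact mul_le_mul_of_nonneg_right (hM s ⟨hs.1.le, hs.2⟩) (Real.exp_nonneg _)
  have h2 : K ≤ t := by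
    have : K ≤ ∫ s in (0 : ℝ)..t, (1 : ℝ) := by
      refine intervalIntegral.integral_mono_on ht (Continuous.intervalIntegrable (by fun_prop) _ _)
        (by simp) fun s hs => ?_
      rw [Real.exp_le_one_iff]
      nlinarith [hs.2]
    simpa using this
  have h3 : l * K ≤ 1 := by
    have hd : ∀ s ∈ Set.uIcc 0 t, HasDerivAt (fun s => Real.exp (-l * (t - s)))
        (l * Real.exp (-l * (t - s))) s := by
      intro s _
      have := (((hasDerivAt_id s).const_sub t).const_mul (-l)).exp
      refine this.congr_deriv ?_
      simp [mul_comm]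
    have := intervalIntegral.integral_eq_sub_of_hasDerivAt hd
      (Continuous.intervalIntegrable (by fun_prop) _ _)
    rw [intervalIntegral.integral_const_mul] at this
    rw [hK, this]
    have := Real.exp_nonneg (-l * (t - 0))
    simp only [sub_self, mul_zero, Real.exp_zero]
    linarith
  rw [le_div_iff₀ (by linarith)]
  nlinarith [mul_le_mul_of_nonneg_right h1 (by linarith : 0 ≤ 1 + l)]

/-- `|ξ|^(2α-1) / (1 + ξ²)` is integrable: by symmetry it suffices to look at `ξ > 0`, where it is
at most `ξ^(2α-1)` on `(0, 1]` and at most `ξ^(2α-3)` on `(1, ∞)`. -/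
lemma integrable_weight {α : ℝ} (hα0 : 0 < α) (hα1 : α < 1) :
    Integrable (fun ξ : ℝ => |ξ| ^ (2 * α - 1) / (1 + ξ ^ 2)) := by
  have hm : Measurable fun y : ℝ => y ^ (2 * α - 1) / (1 + y ^ 2) := by fun_prop
  have key : IntegrableOn (fun y : ℝ => y ^ (2 * α - 1) / (1 + y ^ 2)) (Set.Ioi 0) := by
    rw [← Set.Ioc_union_Ioi_eq_Ioi zero_le_one]
    refine IntegrableOn.union ?_ ?_
    · have h : IntegrableOn (fun y : ℝ => y ^ (2 * α - 1)) (Set.Ioc 0 1) :=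
        (intervalIntegrable_iff_integrableOn_Ioc_of_le zero_le_one).1
          (intervalIntegral.intervalIntegrable_rpow' (by linarith))
      refine Integrable.mono' h hm.aestronglyMeasurable
        (ae_restrict_of_forall_mem measurableSet_Ioc fun y hy => ?_)
      have := hy.1
      rw [Real.norm_of_nonneg (by positivity)]
      exact div_le_self (by positivity) (by nlinarith)
    · have h : IntegrableOn (fun y : ℝ => y ^ (2 * α - 3)) (Set.Ioi 1) :=
        integrableOn_Ioi_rpow_of_lt (by linarith) one_pos
      refine Integrable.mono' h hm.aestronglyMeasurable
        (ae_restrict_of_forall_mem measurableSet_Ioi fun y (hy : 1 < y) => ?_)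
      have hy0 : 0 < y := by linarith
      rw [Real.norm_of_nonneg (by positivity), div_le_iff₀ (by positivity),
        show 2 * α - 1 = (2 * α - 3) + (2 : ℕ) by push_cast; ring, Real.rpow_add hy0,
        Real.rpow_natCast]
      have : 0 < y ^ (2 * α - 3) := by positivity
      nlinarith
  have := (integrable_fun_norm_addHaar (E := ℝ) volume
    (f := fun y : ℝ => y ^ (2 * α - 1) / (1 + y ^ 2))).2 (by simpa using key)
  simpa using this


open MeasureTheory

/-- Lemma 8 of the paper (pointwise-in-`x` version): with `μ(ξ) = |ξ|^{(2α-1)/2}`,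
`u(t) = ∫₀ᵗ v(s) ds` and `φ(ξ,t) = ∫₀ᵗ μ(ξ) e^{-(ξ²+η)(t-s)} v(s) ds`, for every
`t > 0` all three `ξ`-integrals converge absolutely and
`∫_ℝ (ξ²+η) φ(ξ,t) (∫₀ᵗ φ(ξ,s) ds) dξ = u(t) ∫_ℝ φ(ξ,t) μ(ξ) dξ - ∫_ℝ φ(ξ,t)² dξ`. -/
theorem stmt_8 (α η : ℝ) (hα0 : 0 < α) (hα1 : α < 1) (hη : 0 ≤ η)
    (v : ℝ → ℝ) (hv : ContinuousOn v (Set.Ici (0 : ℝ)))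
    (u : ℝ → ℝ) (φ : ℝ → ℝ → ℝ)
    (hu : ∀ t : ℝ, u t = ∫ s in (0 : ℝ)..t, v s)
    (hφ : ∀ ξ t : ℝ, φ ξ t =
      ∫ s in (0 : ℝ)..t, |ξ| ^ ((2 * α - 1) / 2) * Real.exp (-(ξ ^ 2 + η) * (t - s)) * v s) :
    ∀ t > (0 : ℝ),
      Integrable (fun ξ : ℝ => (ξ ^ 2 + η) * φ ξ t * ∫ s in (0 : ℝ)..t, φ ξ s) volume ∧
      Integrable (fun ξ : ℝ => φ ξ t * |ξ| ^ ((2 * α - 1) / 2)) volume ∧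
      Integrable (fun ξ : ℝ => (φ ξ t) ^ 2) volume ∧
      ∫ ξ : ℝ, (ξ ^ 2 + η) * φ ξ t * ∫ s in (0 : ℝ)..t, φ ξ s =
        u t * (∫ ξ : ℝ, φ ξ t * |ξ| ^ ((2 * α - 1) / 2)) -
          ∫ ξ : ℝ, (φ ξ t) ^ 2 := by
  intro t ht
  -- A globally continuous extension of `v` from `[0, ∞)`, since `v` is unconstrained below `0`.
  set V : ℝ → ℝ := fun s => v (max s 0) with hVdef
  have hV : Continuous V := hv.comp_continuous (by fun_prop) fun s => le_max_right s 0
  have hVv : ∀ s, 0 ≤ s → V s = v s := fun s hs => by simp [hVdef, hs]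
  set m : ℝ → ℝ := fun ξ => |ξ| ^ ((2 * α - 1) / 2) with hm
  have hm2 : ∀ ξ, m ξ ^ 2 = |ξ| ^ (2 * α - 1) := fun ξ => by
    rw [hm, ← Real.rpow_mul_natCast (abs_nonneg ξ)]
    congr 1
    push_cast
    ring
  have hφW : ∀ ξ s, 0 ≤ s → φ ξ s = m ξ * relax V (ξ ^ 2 + η) s := by
    intro ξ s hs
    rw [hφ, relax, ← intervalIntegral.integral_const_mul]
    refine intervalIntegral.integral_congr fun r hr => ?_
    rw [Set.uIcc_of_le hs] at hr
    simp only [hVv r hr.1, mul_assoc, hm]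
  have huV : u t = ∫ s in (0 : ℝ)..t, V s := by
    rw [hu]
    refine intervalIntegral.integral_congr fun r hr => ?_
    rw [Set.uIcc_of_le ht.le] at hr
    exact (hVv r hr.1).symm
  have hpt : ∀ ξ, (ξ ^ 2 + η) * φ ξ t * ∫ s in (0 : ℝ)..t, φ ξ s =
      u t * (φ ξ t * m ξ) - φ ξ t ^ 2 := by
    intro ξ
    have h1 : ∫ s in (0 : ℝ)..t, φ ξ s = m ξ * ∫ s in (0 : ℝ)..t, relax V (ξ ^ 2 + η) s := by
      rw [← intervalIntegral.integral_const_mul]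
      refine intervalIntegral.integral_congr fun r hr => ?_
      rw [Set.uIcc_of_le ht.le] at hr
      exact hφW ξ r hr.1
    have h2 := mul_integral_relax hV (ξ ^ 2 + η) t
    rw [h1, hφW ξ t ht.le, huV]
    linear_combination (m ξ ^ 2 * relax V (ξ ^ 2 + η) t) * h2
  obtain ⟨M, hM⟩ : ∃ M, ∀ s ∈ Set.Icc 0 t, |V s| ≤ M := by
    simpa using isCompact_Icc.exists_bound_of_continuousOn hV.continuousOn
  have hM0 : 0 ≤ M := (abs_nonneg _).trans (hM 0 ⟨le_rfl, ht.le⟩)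
  have hWb : ∀ ξ, |relax V (ξ ^ 2 + η) t| ≤ M * (1 + t) / (1 + ξ ^ 2) := fun ξ =>
    (abs_relax_le (by positivity) ht.le hM).trans (by gcongr; linarith)
  have hWc : Continuous fun ξ : ℝ => relax V (ξ ^ 2 + η) t := by
    unfold relax
    apply intervalIntegral.continuous_parametric_intervalIntegral_of_continuous'
    fun_prop
  have hmm : Measurable m := by fun_prop
  have hI1 : Integrable (fun ξ => φ ξ t * m ξ) := by
    have he : (fun ξ => φ ξ t * m ξ) = fun ξ => m ξ ^ 2 * relax V (ξ ^ 2 + η) t := by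
      ext ξ
      rw [hφW ξ t ht.le]
      ring
    rw [he]
    refine Integrable.mono' ((integrable_weight hα0 hα1).const_mul (M * (1 + t)))
      ((hmm.pow_const 2).mul hWc.measurable).aestronglyMeasurable
      (Filter.Eventually.of_forall fun ξ => ?_)
    rw [norm_mul, Real.norm_of_nonneg (sq_nonneg _), hm2, Real.norm_eq_abs]
    calc |ξ| ^ (2 * α - 1) * |relax V (ξ ^ 2 + η) t|
        ≤ |ξ| ^ (2 * α - 1) * (M * (1 + t) / (1 + ξ ^ 2)) := by gcongr; exact hWb ξ
      _ = _ := by ring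
  have hI2 : Integrable (fun ξ => φ ξ t ^ 2) := by
    have he : (fun ξ => φ ξ t ^ 2) = fun ξ => (φ ξ t * m ξ) * relax V (ξ ^ 2 + η) t := by
      ext ξ
      rw [hφW ξ t ht.le]
      ring
    rw [he]
    refine hI1.mul_bdd (c := M * (1 + t)) hWc.aestronglyMeasurable
      (Filter.Eventually.of_forall fun ξ => ?_)
    exact (hWb ξ).trans (div_le_self (by positivity) (by nlinarith [sq_nonneg ξ]))
  refine ⟨?_, hI1, hI2, ?_⟩
  · simp_rw [hpt]
    exact (hI1.const_mul _).sub hI2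
  · simp_rw [hpt]
    rw [integral_sub (hI1.const_mul _) hI2, integral_const_mul]
end
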